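/- arXiv:math/0703156 — 2 statements merged into one kernel-verified Lean document; each statement's English description precedes it below -/
import Mathlib

section
/- Let P ⊆ ℝⁿ be a uniformly discrete set of finite local complexity and let ψ : P → ℝᵐ be strongly P-equivariant. Then there exists a smooth (C^∞) strongly P-equivariant function φ : ℝⁿ → ℝᵐ whose restriction to P equals ψ. -/
open Metric Set

noncomputable section

/-- Euclidean space ℝⁿ. -/
abbrev Euc (n : ℕ) := EuclideanSpace ℝ (Fin n)

/-- The translate `P - x = {p - x : p ∈ P}`. -/
def shiftSet {n : ℕ} (P : Set (Euc n)) (x : Euc n) : Set (Euc n) :=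
  (fun p => p - x) '' P

/-- The `r`-patch of `P` around `x`: `B_r[P - x] = B(0,r) ∩ (P - x)`. -/
def patch {n : ℕ} (P : Set (Euc n)) (r : ℝ) (x : Euc n) : Set (Euc n) :=
  ball (0 : Euc n) r ∩ shiftSet P x

/-- `P` is uniformly discrete: there is a positive minimal distance between points. -/
def UnifDiscrete {n : ℕ} (P : Set (Euc n)) : Prop :=
  ∃ δ > 0, ∀ p ∈ P, ∀ q ∈ P, p ≠ q → δ ≤ ‖p - q‖

/-- `P` is relatively dense: every ball of radius `R` contains a point of `P`. -/
def RelDense {n : ℕ} (P : Set (Euc n)) : Prop :=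
  ∃ R > 0, ∀ x : Euc n, ∃ p ∈ P, ‖p - x‖ < R

/-- `P` has finite local complexity: for each `r > 0`, only finitely many `r`-patches
around points of `P`. -/
def FLC {n : ℕ} (P : Set (Euc n)) : Prop :=
  ∀ r > 0, {s : Set (Euc n) | ∃ x ∈ P, s = patch P r x}.Finite

/-- `f` is `P`-equivariant with range `R`. -/
def EquivRange {n : ℕ} {F : Type*} (P : Set (Euc n)) (R : ℝ) (f : Euc n → F) : Prop :=
  ∀ x y : Euc n, patch P R x = patch P R y → f x = f y

/-- `f` is strongly `P`-equivariant: `P`-equivariant with some finite range `R > 0`. -/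
def StrongEquiv {n : ℕ} {F : Type*} (P : Set (Euc n)) (f : Euc n → F) : Prop :=
  ∃ R > 0, EquivRange P R f

/-- `f`, viewed as a function on the subset `Q`, is `P`-equivariant with range `R`. -/
def EquivRangeOn {n : ℕ} {F : Type*} (P Q : Set (Euc n)) (R : ℝ) (f : Euc n → F) : Prop :=
  ∀ x ∈ Q, ∀ y ∈ Q, patch P R x = patch P R y → f x = f y

/-- `f`, viewed as a function on the subset `Q`, is strongly `P`-equivariant. -/
def StrongEquivOn {n : ℕ} {F : Type*} (P Q : Set (Euc n)) (f : Euc n → F) : Prop :=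
  ∃ R > 0, EquivRangeOn P Q R f

/-- `Q` is locally derivable from `P`. -/
def LocallyDerivable {n : ℕ} (P Q : Set (Euc n)) : Prop :=
  ∃ R > 0, ∀ x y : Euc n, patch P R x = patch P R y →
    ({0} : Set (Euc n)) ∩ shiftSet Q x = ({0} : Set (Euc n)) ∩ shiftSet Q y

/-- Hypothesis (H): for every `r > 0` there is `r' > 0` such that for all `x`,
`B(φ(x), r) ∩ φ(P) ⊆ φ(B(x, r') ∩ P)`. -/
def HypoH {n : ℕ} (P : Set (Euc n)) (φ : Euc n → Euc n) : Prop :=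
  ∀ r > 0, ∃ r' > 0, ∀ x : Euc n, ball (φ x) r ∩ (φ '' P) ⊆ φ '' (ball x r' ∩ P)

/-- The pattern metric `D` on closed subsets of ℝⁿ. -/
def patternDist {n : ℕ} (A B : Set (Euc n)) : ℝ :=
  sInf {ε : ℝ | 0 < ε ∧ Metric.hausdorffDist
    ((ball (0 : Euc n) (1 / ε) ∩ A) ∪ sphere (0 : Euc n) (1 / ε))
    ((ball (0 : Euc n) (1 / ε) ∩ B) ∪ sphere (0 : Euc n) (1 / ε)) ≤ ε}

/-- A continuous `f : ℝⁿ → ℝⁿ` is weakly `P`-equivariant if it is uniformly approximated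
by strongly `P`-equivariant continuous functions. -/
def WeakEquiv {n : ℕ} (P : Set (Euc n)) (f : Euc n → Euc n) : Prop :=
  ∀ ε > 0, ∃ g : Euc n → Euc n, Continuous g ∧ StrongEquiv P g ∧ ∀ x : Euc n, ‖f x - g x‖ < ε

/-- `P` is aperiodic: the only translation fixing `P` is `0`. -/
def IsAperiodicSet {n : ℕ} (P : Set (Euc n)) : Prop :=
  ∀ x : Euc n, shiftSet P x = P → x = 0

open scoped Classical in
/-- The sum of bumps `b` centred at the points of `P`, weighted by `ψ`, for `b` supported in the
ball of radius `r` and `P` with minimal distance larger than `2 * r`. -/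
def bumpExtension {n m : ℕ} (P : Set (Euc n)) (r : ℝ) (b : Euc n → ℝ) (ψ : Euc n → Euc m)
    (x : Euc n) : Euc m :=
  if h : ∃ p ∈ P, ‖p - x‖ < r then b (h.choose - x) • ψ h.choose else 0

theorem bumpExtension_eq_smul {n m : ℕ} {P : Set (Euc n)} {r s : ℝ} {b : Euc n → ℝ}
    (hb : ∀ v, r ≤ ‖v‖ → b v = 0)
    (hP : ∀ p ∈ P, ∀ q ∈ P, p ≠ q → r + s ≤ ‖p - q‖) (ψ : Euc n → Euc m)
    {x p : Euc n} (hp : p ∈ P) (hx : ‖p - x‖ < s) :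
    bumpExtension P r b ψ x = b (p - x) • ψ p := by
  unfold bumpExtension
  split_ifs with h
  · obtain ⟨hq, hqx⟩ := h.choose_spec
    have : h.choose = p := by
      by_contra hne
      have h1 := hP _ hq _ hp hne
      have h2 := norm_sub_le (h.choose - x) (p - x)
      rw [sub_sub_sub_cancel_right] at h2
      linarith
    rw [this]
  · push Not at h
    rw [hb _ (h p hp), zero_smul]

theorem bumpExtension_eq_zero {n m : ℕ} {P : Set (Euc n)} {r : ℝ} (b : Euc n → ℝ)
    (ψ : Euc n → Euc m) {x : Euc n} (hx : ∀ p ∈ P, r ≤ ‖p - x‖) :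
    bumpExtension P r b ψ x = 0 :=
  dif_neg (by push Not; exact hx)

theorem contDiff_bumpExtension {n m : ℕ} {P : Set (Euc n)} {r s : ℝ} {b : Euc n → ℝ}
    (hb : ∀ v, r ≤ ‖v‖ → b v = 0) (hrs : r < s)
    (hP : ∀ p ∈ P, ∀ q ∈ P, p ≠ q → r + s ≤ ‖p - q‖) {k : WithTop ℕ∞} (hbk : ContDiff ℝ k b)
    (ψ : Euc n → Euc m) :
    ContDiff ℝ k (bumpExtension P r b ψ) := by
  rw [contDiff_iff_contDiffAt]
  intro x
  by_cases h : ∃ p ∈ P, ‖p - x‖ < s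
  · obtain ⟨p, hp, hx⟩ := h
    have hsmooth : ContDiff ℝ k fun y => b (p - y) • ψ p :=
      (hbk.comp (contDiff_const.sub contDiff_id)).smul contDiff_const
    refine hsmooth.contDiffAt.congr_of_eventuallyEq ?_
    have hnear : ∀ᶠ y in nhds x, ‖p - y‖ < s :=
      (continuous_const.sub continuous_id).norm.continuousAt.eventually_lt_const hx
    filter_upwards [hnear] with y hy
    exact bumpExtension_eq_smul hb hP ψ hp hy
  · push Not at h
    refine (contDiffAt_const (c := (0 : Euc m))).congr_of_eventuallyEq ?_
    filter_upwards [ball_mem_nhds x (sub_pos.2 hrs)] with y hy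
    refine bumpExtension_eq_zero b ψ fun p hp => ?_
    have h1 := h p hp
    have h2 := norm_sub_le_norm_sub_add_norm_sub p y x
    rw [mem_ball, dist_eq_norm] at hy
    linarith

theorem mem_patch {n : ℕ} {P : Set (Euc n)} {r : ℝ} {x v : Euc n} :
    v ∈ patch P r x ↔ ‖v‖ < r ∧ v + x ∈ P := by
  simp only [patch, shiftSet, mem_inter_iff, mem_ball_zero_iff, mem_image, sub_eq_iff_eq_add,
    exists_eq_right]

theorem patch_add_eq_patch_add {n : ℕ} {P : Set (Euc n)} {r s : ℝ} {x y v : Euc n}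
    (h : patch P (r + s) x = patch P (r + s) y) (hv : ‖v‖ < s) :
    patch P r (v + x) = patch P r (v + y) := by
  ext w
  rw [mem_patch, mem_patch, and_congr_right_iff]
  intro hw
  have hwv : ‖w + v‖ < r + s := (norm_add_le w v).trans_lt (add_lt_add hw hv)
  have := Set.ext_iff.1 h (w + v)
  simpa only [mem_patch, hwv, true_and, add_assoc] using this

theorem equivRange_bumpExtension {n m : ℕ} {P : Set (Euc n)} {r R : ℝ} {b : Euc n → ℝ}
    (hb : ∀ v, r ≤ ‖v‖ → b v = 0) (hR : 0 < R)
    (hP : ∀ p ∈ P, ∀ q ∈ P, p ≠ q → r + r ≤ ‖p - q‖) {ψ : Euc n → Euc m}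
    (hψ : EquivRangeOn P P R ψ) :
    EquivRange P (R + r) (bumpExtension P r b ψ) := by
  intro x y h
  have hmem : ∀ v : Euc n, ‖v‖ < r → (v + x ∈ P ↔ v + y ∈ P) := fun v hv => by
    have hv' : ‖v‖ < R + r := by linarith
    simpa only [mem_patch, hv', true_and] using Set.ext_iff.1 h v
  by_cases hx : ∃ p ∈ P, ‖p - x‖ < r
  · obtain ⟨p, hp, hpx⟩ := hx
    obtain ⟨v, rfl⟩ : ∃ v, v + x = p := ⟨p - x, sub_add_cancel p x⟩
    rw [add_sub_cancel_right] at hpx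
    have hq := (hmem v hpx).1 hp
    rw [bumpExtension_eq_smul hb hP ψ hp (by rwa [add_sub_cancel_right]),
      bumpExtension_eq_smul hb hP ψ hq (by rwa [add_sub_cancel_right]),
      add_sub_cancel_right, add_sub_cancel_right,
      hψ _ hp _ hq (patch_add_eq_patch_add h hpx)]
  · push Not at hx
    rw [bumpExtension_eq_zero b ψ hx, bumpExtension_eq_zero b ψ]
    intro q hq
    by_contra! hqy
    have hqx := hx _ ((hmem (q - y) hqy).2 (by rwa [sub_add_cancel]))
    rw [add_sub_cancel_right] at hqx
    linarith

theorem stmt1 {n m : ℕ} (P : Set (Euc n)) (hUD : UnifDiscrete P) (hFLC : FLC P)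
    (ψ : Euc n → Euc m) (hψ : StrongEquivOn P P ψ) :
    ∃ φ : Euc n → Euc m, ContDiff ℝ (⊤ : ℕ∞) φ ∧ StrongEquiv P φ ∧ ∀ p ∈ P, φ p = ψ p := by
  obtain ⟨δ, hδ, hP⟩ := hUD
  obtain ⟨R, hR, hψR⟩ := hψ
  let b : ContDiffBump (0 : Euc n) := ⟨δ / 8, δ / 4, by linarith, by linarith⟩
  have hb : ∀ v, δ / 4 ≤ ‖v‖ → b v = 0 := fun v hv =>
    b.zero_of_le_dist (by rwa [dist_zero_right])
  have hP₁ : ∀ p ∈ P, ∀ q ∈ P, p ≠ q → δ / 4 + δ / 2 ≤ ‖p - q‖ := fun p hp q hq hpq => by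
    linarith [hP p hp q hq hpq]
  have hP₂ : ∀ p ∈ P, ∀ q ∈ P, p ≠ q → δ / 4 + δ / 4 ≤ ‖p - q‖ := fun p hp q hq hpq => by
    linarith [hP p hp q hq hpq]
  refine ⟨bumpExtension P (δ / 4) b ψ, contDiff_bumpExtension hb (by linarith) hP₁ b.contDiff ψ,
    ⟨R + δ / 4, by linarith, equivRange_bumpExtension hb hR hP₂ hψR⟩, fun p hp => ?_⟩
  rw [bumpExtension_eq_smul hb hP₁ ψ hp (by rw [sub_self, norm_zero]; linarith), sub_self,
    b.one_of_mem_closedBall (mem_closedBall_self b.rIn_pos.le), one_smul]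
end
end

section
/- Let P ⊆ ℝⁿ be a uniformly discrete set of finite local complexity and let ψ : P → ℝᵐ be a function such that for every ε > 0 there exists a strongly P-equivariant function ψ_ε : P → ℝᵐ with |ψ(p) − ψ_ε(p)| < ε for all p ∈ P. Then there exists a smooth (C^∞) function φ : ℝⁿ → ℝᵐ whose restriction to P equals ψ and which is weakly P-equivariant in the Fréchet sense: for every l ∈ ℕ and every ε > 0 there exists a smooth strongly P-equivariant function φ' : ℝⁿ → ℝᵐ such that sup over x ∈ ℝⁿ and all multi-indices α with |α| ≤ l of |D^α(φ − φ')(x)| is less than ε. -/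
open Metric Set

noncomputable section

theorem mem_patch_iff {n : ℕ} {P : Set (Euc n)} {r : ℝ} {x z : Euc n} :
    z ∈ patch P r x ↔ ‖z‖ < r ∧ z + x ∈ P := by
  simp only [patch, shiftSet, mem_inter_iff, mem_ball_zero_iff, mem_image]
  refine and_congr_right fun _ => ⟨?_, fun h => ⟨_, h, by abel⟩⟩
  rintro ⟨p, hp, rfl⟩
  simpa using hp

/-- Equality of large patches passes to smaller patches around nearby points. -/
theorem patch_add_eq_of_patch_eq {n : ℕ} {P : Set (Euc n)} {R s : ℝ} {x y v : Euc n}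
    (h : patch P (R + s) x = patch P (R + s) y) (hv : ‖v‖ ≤ s) :
    patch P R (x + v) = patch P R (y + v) := by
  ext z
  simp only [mem_patch_iff]
  refine and_congr_right fun hz => ?_
  have hzv : ‖z + v‖ < R + s := (norm_add_le z v).trans_lt (by linarith)
  have key := Set.ext_iff.1 h (z + v)
  simp only [mem_patch_iff, hzv, true_and] at key
  rw [show z + (x + v) = z + v + x by abel, show z + (y + v) = z + v + y by abel]
  exact key

open Classical in
/-- The superposition of copies of `χ` placed at the points `p ∈ P` and weighted by `a p`,
where `χ` is supported in a ball of radius `r` so small that the copies do not overlap. -/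
def bumpSum {n m : ℕ} (P : Set (Euc n)) (r : ℝ) (χ : Euc n → ℝ) (a : Euc n → Euc m)
    (x : Euc n) : Euc m :=
  if h : ∃ p ∈ P, ‖x - p‖ < r then χ (x - h.choose) • a h.choose else 0

section bumpSum

variable {n m : ℕ} {P : Set (Euc n)} {r : ℝ} {χ : Euc n → ℝ}

theorem bumpSum_of_forall_le (a : Euc n → Euc m) {x : Euc n} (h : ∀ p ∈ P, r ≤ ‖x - p‖) :
    bumpSum P r χ a x = 0 :=
  dif_neg fun ⟨p, hp, hlt⟩ => (h p hp).not_gt hlt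

theorem eq_of_norm_sub_lt {δ : ℝ} (hP : ∀ p ∈ P, ∀ q ∈ P, p ≠ q → δ ≤ ‖p - q‖)
    {p q x : Euc n} (hp : p ∈ P) (hq : q ∈ P) (h : ‖x - p‖ + ‖x - q‖ < δ) : p = q := by
  by_contra hne
  have h1 := hP p hp q hq hne
  have h2 := norm_sub_le (x - q) (x - p)
  rw [sub_sub_sub_cancel_left] at h2
  linarith

theorem bumpSum_of_lt (hP : ∀ p ∈ P, ∀ q ∈ P, p ≠ q → 4 * r ≤ ‖p - q‖)
    (a : Euc n → Euc m) {x p : Euc n} (hp : p ∈ P) (hx : ‖x - p‖ < r) :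
    bumpSum P r χ a x = χ (x - p) • a p := by
  have h : ∃ p ∈ P, ‖x - p‖ < r := ⟨p, hp, hx⟩
  have hc := h.choose_spec
  have hr : 0 < r := (norm_nonneg _).trans_lt hx
  have : h.choose = p := eq_of_norm_sub_lt hP (x := x) hc.1 hp (by linarith [hc.2])
  rw [bumpSum, dif_pos h, this]

theorem bumpSum_sub (a b : Euc n → Euc m) (x : Euc n) :
    bumpSum P r χ a x - bumpSum P r χ b x = bumpSum P r χ (fun p => a p - b p) x := by
  unfold bumpSum
  split_ifs
  · rw [smul_sub]
  · rw [sub_zero]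

theorem bumpSum_eventuallyEq (hr : 0 < r) (hP : ∀ p ∈ P, ∀ q ∈ P, p ≠ q → 4 * r ≤ ‖p - q‖)
    (hχ : ∀ x, r ≤ ‖x‖ → χ x = 0) (a : Euc n → Euc m) (x : Euc n) :
    (∃ p ∈ P, bumpSum P r χ a =ᶠ[nhds x] fun y => χ (y - p) • a p) ∨
      bumpSum P r χ a =ᶠ[nhds x] fun _ => 0 := by
  by_cases h : ∃ p ∈ P, ‖x - p‖ < 2 * r
  · obtain ⟨p, hp, hxp⟩ := h
    refine Or.inl ⟨p, hp, ?_⟩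
    filter_upwards [ball_mem_nhds x hr] with y hy
    rw [mem_ball_iff_norm] at hy
    by_cases hyp : ‖y - p‖ < r
    · exact bumpSum_of_lt hP a hp hyp
    · rw [hχ _ (not_lt.1 hyp), zero_smul]
      refine bumpSum_of_forall_le a fun q hq => not_lt.1 fun hyq => hyp ?_
      have h1 := norm_sub_le_norm_sub_add_norm_sub x y q
      rw [norm_sub_rev x y] at h1
      rwa [eq_of_norm_sub_lt hP (x := x) hp hq (by linarith)]
  · push Not at h
    refine Or.inr ?_
    filter_upwards [ball_mem_nhds x hr] with y hy
    rw [mem_ball_iff_norm] at hy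
    refine bumpSum_of_forall_le a fun q hq => ?_
    have h1 := norm_sub_le_norm_sub_add_norm_sub x y q
    rw [norm_sub_rev x y] at h1
    linarith [h q hq]

theorem contDiff_bumpSum (hr : 0 < r) (hP : ∀ p ∈ P, ∀ q ∈ P, p ≠ q → 4 * r ≤ ‖p - q‖)
    (hχ : ∀ x, r ≤ ‖x‖ → χ x = 0) {k : WithTop ℕ∞} (hk : ContDiff ℝ k χ)
    (a : Euc n → Euc m) : ContDiff ℝ k (bumpSum P r χ a) := by
  refine contDiff_iff_contDiffAt.2 fun x => ?_
  rcases bumpSum_eventuallyEq hr hP hχ a x with ⟨p, -, h⟩ | h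
  · refine ContDiffAt.congr_of_eventuallyEq ?_ h
    exact ((hk.comp (contDiff_id.sub contDiff_const)).smul contDiff_const).contDiffAt
  · exact contDiffAt_const.congr_of_eventuallyEq h

theorem norm_iteratedFDeriv_bumpSum_le (hr : 0 < r)
    (hP : ∀ p ∈ P, ∀ q ∈ P, p ≠ q → 4 * r ≤ ‖p - q‖) (hχ : ∀ x, r ≤ ‖x‖ → χ x = 0)
    {i : ℕ} (hk : ContDiff ℝ i χ) {a : Euc n → Euc m} {c C : ℝ} (hc : 0 ≤ c)
    (ha : ∀ p ∈ P, ‖a p‖ ≤ c) (hC : ∀ x, ‖iteratedFDeriv ℝ i χ x‖ ≤ C) (x : Euc n) :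
    ‖iteratedFDeriv ℝ i (bumpSum P r χ a) x‖ ≤ c * C := by
  have hC0 : 0 ≤ C := (norm_nonneg _).trans (hC x)
  rcases bumpSum_eventuallyEq hr hP hχ a x with ⟨p, hp, h⟩ | h
  · rw [(h.iteratedFDeriv ℝ i).eq_of_nhds]
    let L : ℝ →L[ℝ] Euc m := ContinuousLinearMap.toSpanSingleton ℝ (a p)
    have hcd : ContDiff ℝ i fun y => χ (y - p) := hk.comp (contDiff_id.sub contDiff_const)
    have h1 := L.norm_iteratedFDeriv_comp_left (x := x) hcd.contDiffAt le_rfl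
    rw [iteratedFDeriv_comp_sub, ContinuousLinearMap.norm_toSpanSingleton] at h1
    exact h1.trans (mul_le_mul (ha p hp) (hC _) (norm_nonneg _) hc)
  · rw [(h.iteratedFDeriv ℝ i).eq_of_nhds]
    have h0 : iteratedFDeriv ℝ i (fun _ : Euc n => (0 : Euc m)) x = 0 :=
      congrFun iteratedFDeriv_fun_zero x
    rw [h0, norm_zero]
    positivity

theorem EquivRangeOn.bumpSum (hP : ∀ p ∈ P, ∀ q ∈ P, p ≠ q → 4 * r ≤ ‖p - q‖)
    {a : Euc n → Euc m} {R : ℝ} (hR : 0 < R) (ha : EquivRangeOn P P R a) :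
    EquivRange P (R + r) (bumpSum P r χ a) := by
  have transfer : ∀ x y : Euc n, patch P (R + r) x = patch P (R + r) y →
      ∀ p ∈ P, ‖x - p‖ < r → y + (p - x) ∈ P ∧ ‖y - (y + (p - x))‖ < r := by
    intro x y h p hp hx
    have hv : p - x ∈ patch P (R + r) x :=
      mem_patch_iff.2 ⟨by rw [norm_sub_rev]; linarith, by simpa using hp⟩
    rw [h, mem_patch_iff, add_comm (p - x) y] at hv
    refine ⟨hv.2, ?_⟩
    rwa [sub_add_cancel_left, neg_sub]
  intro x y h
  by_cases hx : ∃ p ∈ P, ‖x - p‖ < r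
  · obtain ⟨p, hp, hxp⟩ := hx
    obtain ⟨hq, hyq⟩ := transfer x y h p hp hxp
    rw [bumpSum_of_lt hP a hp hxp, bumpSum_of_lt hP a hq hyq, sub_add_cancel_left, neg_sub]
    have hpatch := patch_add_eq_of_patch_eq h (v := p - x) (by rw [norm_sub_rev]; exact hxp.le)
    rw [add_sub_cancel] at hpatch
    rw [ha p hp _ hq hpatch]
  · have hy : ¬ ∃ p ∈ P, ‖y - p‖ < r := fun ⟨p, hp, hyp⟩ =>
      hx ⟨_, transfer y x h.symm p hp hyp⟩
    push Not at hx hy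
    rw [bumpSum_of_forall_le a hx, bumpSum_of_forall_le a hy]

end bumpSum

theorem stmt2 {n m : ℕ} (P : Set (Euc n)) (hUD : UnifDiscrete P) (hFLC : FLC P)
    (ψ : Euc n → Euc m)
    (happ : ∀ ε > 0, ∃ ψε : Euc n → Euc m, StrongEquivOn P P ψε ∧
      ∀ p ∈ P, ‖ψ p - ψε p‖ < ε) :
    ∃ φ : Euc n → Euc m, ContDiff ℝ (⊤ : ℕ∞) φ ∧ (∀ p ∈ P, φ p = ψ p) ∧
      ∀ l : ℕ, ∀ ε > 0, ∃ φ' : Euc n → Euc m, ContDiff ℝ (⊤ : ℕ∞) φ' ∧ StrongEquiv P φ' ∧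
        ∀ i ≤ l, ∀ x : Euc n, ‖iteratedFDeriv ℝ i (fun y => φ y - φ' y) x‖ < ε := by
  obtain ⟨δ, hδ, hP⟩ := hUD
  obtain ⟨r, rfl⟩ : ∃ r, δ = 4 * r := ⟨δ / 4, by ring⟩
  have hr : 0 < r := by linarith
  let χ : ContDiffBump (0 : Euc n) := ⟨r / 2, r, by linarith, by linarith⟩
  have hχ : ∀ x, r ≤ ‖x‖ → χ x = 0 := fun x hx => χ.zero_of_le_dist (by simpa using hx)
  have hsmooth : ContDiff ℝ (⊤ : ℕ∞) χ := χ.contDiff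
  have hbdd : ∀ i : ℕ, ∃ C, ∀ x, ‖iteratedFDeriv ℝ i χ x‖ ≤ C := fun i =>
    (χ.hasCompactSupport.iteratedFDeriv i).exists_bound_of_continuous
      (hsmooth.continuous_iteratedFDeriv (by exact_mod_cast le_top))
  choose C hC using hbdd
  have hC0 : ∀ i, 0 ≤ C i := fun i => (norm_nonneg _).trans (hC i 0)
  refine ⟨bumpSum P r χ ψ, contDiff_bumpSum hr hP hχ hsmooth ψ, fun p hp => ?_,
    fun l ε hε => ?_⟩
  · rw [bumpSum_of_lt hP ψ hp (by simpa using hr), sub_self, χ.one_of_mem_closedBall (mem_closedBall_self χ.rIn_pos.le),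
      one_smul]
  · set K := ∑ i ∈ Finset.range (l + 1), C i with hK
    have hK0 : 0 ≤ K := Finset.sum_nonneg fun i _ => hC0 i
    have hc : 0 < ε / (K + 1) := by positivity
    obtain ⟨ψ', ⟨R, hR, hequiv⟩, hclose⟩ := happ _ hc
    refine ⟨bumpSum P r χ ψ', contDiff_bumpSum hr hP hχ hsmooth ψ',
      ⟨R + r, by linarith, hequiv.bumpSum hP hR⟩, fun i hi x => ?_⟩
    simp only [bumpSum_sub]
    have hCK : C i ≤ K :=
      Finset.single_le_sum (fun j _ => hC0 j) (Finset.mem_range.2 (by omega))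
    calc _ ≤ ε / (K + 1) * C i :=
          norm_iteratedFDeriv_bumpSum_le hr hP hχ (hsmooth.of_le (by exact_mod_cast le_top))
            hc.le (fun p hp => (hclose p hp).le) (hC i) x
      _ < ε / (K + 1) * (K + 1) := mul_lt_mul_of_pos_left (by linarith) hc
      _ = ε := div_mul_cancel₀ _ (by linarith)
end
end
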